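/- Let (X,d) be a locally compact separable metric space with an exhaustion ⟨K_n : n < ω⟩ by compact sets satisfying K_n ⊆ int(K_{n+1}) and X = ⋃_n K_n. Then for every g : ω → ω there exists a proper metric d_g on X, compatible with the topology of X, such that (i) for every n and all x, y ∈ X \ K_{n-1}, d_g(x,y) ≥ g(n)·d(x,y), and (ii) for every n, d_g(K_{n-1}, X \ K_n) ≥ n (with K_{-1} = ∅). -/

import Mathlib

theorem aux_rho {X : Type*} [MetricSpace X] (A B : Set X) (hA : IsCompact A)
    (hAB : A ⊆ interior B) (G N : ℝ) (hG : 0 ≤ G) (hN : 0 ≤ N) :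
    ∃ r : X → X → ℝ, (∀ x y, 0 ≤ r x y) ∧ (∀ x, r x x = 0) ∧ (∀ x y, r x y = r y x) ∧
      (∀ x y z, r x z ≤ r x y + r y z) ∧ (∀ x, Continuous (r x)) ∧
      (∀ x ∈ A, ∀ y ∈ A, r x y = 0) ∧
      (∀ x ∉ B, ∀ y ∉ B, G * dist x y ≤ r x y) ∧
      (∀ x ∈ A, ∀ y ∉ B, N ≤ r x y) := by
  rcases A.eq_empty_or_nonempty with rfl | hne
  · refine ⟨fun x y => G * dist x y, fun x y => by positivity, fun x => by simp,
      fun x y => by simp [dist_comm], fun x y z => ?_, fun x => by fun_prop, by simp,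
      fun x _ y _ => le_rfl, by simp⟩
    have := mul_le_mul_of_nonneg_left (dist_triangle x y z) hG
    simp only
    linarith
  · obtain ⟨δ, hδ, hδs⟩ := hA.exists_thickening_subset_open isOpen_interior hAB
    have hfar : ∀ y ∉ B, δ ≤ Metric.infDist y A := by
      intro y hy
      by_contra! h
      obtain ⟨z, hz, hyz⟩ := (Metric.infDist_lt_iff hne).1 h
      exact hy (interior_subset (hδs (Metric.mem_thickening_iff.2 ⟨z, hz, hyz⟩)))
    have h0 : ∀ y ∈ A, Metric.infDist y A = 0 := fun y hy => Metric.infDist_zero_of_mem hy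
    have hnn : ∀ y, 0 ≤ Metric.infDist y A := fun y => Metric.infDist_nonneg
    have hlip : ∀ x y, Metric.infDist x A ≤ Metric.infDist y A + dist x y :=
      fun x y => Metric.infDist_le_infDist_add_dist
    have hD : ∀ x y, dist x y ≤ Metric.infDist x A + Metric.infDist y A + Metric.diam A := by
      intro x y
      obtain ⟨p, hp, hpx⟩ := hA.exists_infDist_eq_dist hne x
      obtain ⟨q, hq, hqy⟩ := hA.exists_infDist_eq_dist hne y
      have h1 := Metric.dist_le_diam_of_mem hA.isBounded hp hq
      have h2 := dist_triangle4 x p q y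
      rw [dist_comm q y] at h2
      linarith
    have hDn : 0 ≤ Metric.diam A := Metric.diam_nonneg
    have hcont : Continuous (fun y => Metric.infDist y A) := Metric.continuous_infDist_pt A
    have hle : ∀ x ∈ A, ∀ y, Metric.infDist y A ≤ dist x y := fun x hx y => by
      rw [dist_comm]; exact Metric.infDist_le_dist_of_mem hx
    generalize Metric.diam A = D at *
    obtain ⟨c, hc⟩ : ∃ c, c = G * (1 + D / δ) + N / δ := ⟨_, rfl⟩
    have hq : 0 ≤ D / δ := by positivity
    have hq2 : 0 ≤ N / δ := by positivity
    have hc0 : 0 ≤ c := by rw [hc]; positivity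
    refine ⟨fun x y => c * min (dist x y) (Metric.infDist x A + Metric.infDist y A),
      fun x y => ?_, fun x => ?_, fun x y => ?_, fun x y z => ?_, fun x => ?_,
      fun x hx y hy => ?_, fun x hx y hy => ?_, fun x hx y hy => ?_⟩
    · exact mul_nonneg hc0 (le_min dist_nonneg (add_nonneg (hnn x) (hnn y)))
    · simp [hnn x]
    · simp only [dist_comm, add_comm]
    · simp only
      rw [← mul_add]
      apply mul_le_mul_of_nonneg_left _ hc0
      have := dist_triangle x y z
      have := hlip x y
      have := hlip z y
      rw [dist_comm z y] at this
      have := hnn y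
      rcases min_cases (dist x y) (Metric.infDist x A + Metric.infDist y A) with h | h <;>
      rcases min_cases (dist y z) (Metric.infDist y A + Metric.infDist z A) with h' | h' <;>
      rw [h.1, h'.1, min_le_iff] <;> first | (left; linarith) | (right; linarith)
    · have : Continuous (fun y => Metric.infDist y A) := Metric.continuous_infDist_pt A
      fun_prop
    · simp [h0 x hx, h0 y hy]
    · simp only
      have hx' := hfar x hx
      have hy' := hfar y hy
      have hGc : G ≤ c := by rw [hc]; nlinarith [mul_nonneg hG hq]
      rw [mul_min_of_nonneg _ _ hc0]
      apply le_min
      · exact mul_le_mul_of_nonneg_right hGc dist_nonneg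
      · have e : D = D / δ * δ := by field_simp
        have h1 : dist x y ≤ (1 + D / δ) * (Metric.infDist x A + Metric.infDist y A) := by
          have := hD x y
          have : D / δ * δ ≤ D / δ * (Metric.infDist x A + Metric.infDist y A) :=
            mul_le_mul_of_nonneg_left (by linarith) hq
          linarith
        have h2 := mul_le_mul_of_nonneg_left h1 hG
        have h3 : 0 ≤ N / δ * (Metric.infDist x A + Metric.infDist y A) :=
          mul_nonneg hq2 (by linarith)
        rw [hc]
        linarith
    · simp only
      have hy' := hfar y hy
      rw [h0 x hx, zero_add, min_eq_right (hle x hx y)]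
      have h1 : N / δ ≤ c := by
        have : 0 ≤ G * (1 + D / δ) := by positivity
        linarith
      calc N = N / δ * δ := by field_simp
        _ ≤ c * Metric.infDist y A := mul_le_mul h1 hy' hδ.le hc0

/-- Let `(X, d)` be a locally compact separable metric space with an exhaustion `⟨K n⟩` by
compact sets with `K n ⊆ int (K (n+1))` and `X = ⋃ n, K n`. Then for every `g : ℕ → ℕ` there
is a proper metric `d'` on `X`, compatible with the topology of `X`, such that
(i) `d' x y ≥ g n * d x y` whenever `x, y ∉ K_{n-1}`, and
(ii) `d'(K_{n-1}, X \ K n) ≥ n` (with `K_{-1} = ∅`; the `n = 0` instances of (i) and (ii) are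
stated separately resp. are trivial). -/
theorem stmt11 {X : Type*} [MetricSpace X] [LocallyCompactSpace X]
    [TopologicalSpace.SeparableSpace X]
    (K : ℕ → Set X) (hK : ∀ n, IsCompact (K n))
    (hsub : ∀ n, K n ⊆ interior (K (n + 1)))
    (hcover : (⋃ n, K n) = Set.univ)
    (g : ℕ → ℕ) :
    ∃ d' : X → X → ℝ,
      -- `d'` is a metric on `X`
      (∀ x y, 0 ≤ d' x y) ∧ (∀ x y, d' x y = 0 ↔ x = y) ∧
      (∀ x y, d' x y = d' y x) ∧ (∀ x y z, d' x z ≤ d' x y + d' y z) ∧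
      -- compatible with the topology of `X`
      (∀ s : Set X, IsOpen s ↔ ∀ x ∈ s, ∃ ε > (0 : ℝ), ∀ y, d' x y < ε → y ∈ s) ∧
      -- proper: every `d'`-bounded set has compact closure
      (∀ s : Set X, (∃ M : ℝ, ∀ x ∈ s, ∀ y ∈ s, d' x y ≤ M) → IsCompact (closure s)) ∧
      -- (i)
      (∀ x y : X, (g 0 : ℝ) * dist x y ≤ d' x y) ∧
      (∀ n : ℕ, ∀ x ∉ K n, ∀ y ∉ K n, (g (n + 1) : ℝ) * dist x y ≤ d' x y) ∧
      -- (ii)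
      (∀ n : ℕ, ∀ x ∈ K n, ∀ y ∉ K (n + 1), ((n + 1 : ℕ) : ℝ) ≤ d' x y) := by
  choose r rnn rself rsymm rtri rcont rzero rG rN using fun n : ℕ =>
    aux_rho (K n) (K (n + 1)) (hK n) (hsub n) (g (n + 2) : ℝ) ((n + 1 : ℕ) : ℝ)
      (Nat.cast_nonneg _) (Nat.cast_nonneg _)
  have hmono : Monotone K := monotone_nat_of_le_succ fun n => (hsub n).trans interior_subset
  have hex : ∀ x, ∃ m, x ∈ K m := fun x => by
    have : x ∈ ⋃ n, K n := hcover ▸ Set.mem_univ x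
    simpa using this
  have hex2 : ∀ x y, ∃ m, x ∈ K m ∧ y ∈ K m := fun x y => by
    obtain ⟨a, ha⟩ := hex x
    obtain ⟨b, hb⟩ := hex y
    exact ⟨max a b, hmono (le_max_left _ _) ha, hmono (le_max_right _ _) hb⟩
  obtain ⟨C, hC⟩ : ∃ C : ℝ, C = 1 + g 0 + g 1 := ⟨_, rfl⟩
  have hg0 : (0 : ℝ) ≤ g 0 := Nat.cast_nonneg _
  have hg1 : (0 : ℝ) ≤ g 1 := Nat.cast_nonneg _
  have hC1 : 1 ≤ C := by linarith
  obtain ⟨d, hd⟩ : ∃ d : X → X → ℝ, ∀ x y, d x y = C * dist x y + ∑' n, r n x y :=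
    ⟨_, fun _ _ => rfl⟩
  have hdm : ∀ m, ∀ x ∈ K m, ∀ y ∈ K m,
      d x y = C * dist x y + ∑ n ∈ Finset.range m, r n x y := by
    intro m x hx y hy
    rw [hd, tsum_eq_sum]
    intro n hn
    have hmn : m ≤ n := by simpa using hn
    exact rzero n x (hmono hmn hx) y (hmono hmn hy)
  have hsm : ∀ x y, Summable fun n => r n x y := by
    intro x y
    obtain ⟨m, hx, hy⟩ := hex2 x y
    refine summable_of_ne_finset_zero (s := Finset.range m) fun n hn => ?_
    have hmn : m ≤ n := by simpa using hn
    exact rzero n x (hmono hmn hx) y (hmono hmn hy)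
  have hCd : ∀ x y, C * dist x y ≤ d x y := fun x y => by
    rw [hd]
    have : 0 ≤ ∑' n, r n x y := tsum_nonneg (fun n => rnn n x y)
    linarith
  have hdd : ∀ x y, dist x y ≤ d x y := fun x y => by
    have := hCd x y
    nlinarith [dist_nonneg (x := x) (y := y)]
  have hrd : ∀ n x y, r n x y ≤ d x y := fun n x y => by
    rw [hd]
    have := (hsm x y).le_tsum n (fun j _ => rnn j x y)
    have : 0 ≤ C * dist x y := by positivity
    linarith
  have hII : ∀ n : ℕ, ∀ x ∈ K n, ∀ y ∉ K (n + 1), ((n + 1 : ℕ) : ℝ) ≤ d x y :=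
    fun n x hx y hy => (rN n x hx y hy).trans (hrd n x y)
  have hself : ∀ x, d x x = 0 := fun x => by simp [hd, rself]
  refine ⟨d, fun x y => dist_nonneg.trans (hdd x y), fun x y => ⟨fun h => ?_, ?_⟩, fun x y => ?_,
    fun x y z => ?_, fun s => ⟨fun hs x hx => ?_, fun h => ?_⟩, fun s => ?_, fun x y => ?_,
    fun n x hx y hy => ?_, hII⟩
  · exact dist_le_zero.1 (h ▸ hdd x y)
  · rintro rfl
    exact hself x
  · rw [hd, hd, dist_comm]
    simp only [rsymm _ x y]
  · rw [hd, hd, hd]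
    have h1 := (hsm x z).tsum_le_tsum (fun n => rtri n x y z) ((hsm x y).add (hsm y z))
    rw [(hsm x y).tsum_add (hsm y z)] at h1
    have h2 := mul_le_mul_of_nonneg_left (dist_triangle x y z) (by linarith : 0 ≤ C)
    linarith
  · obtain ⟨ε, hε, hb⟩ := Metric.isOpen_iff.1 hs x hx
    refine ⟨ε, hε, fun y hy => hb ?_⟩
    rw [Metric.mem_ball, dist_comm]
    exact (hdd x y).trans_lt hy
  · rw [isOpen_iff_mem_nhds]
    intro x hx
    obtain ⟨ε, hε, hb⟩ := h x hx
    obtain ⟨m, hm⟩ := hex x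
    have hcont : Continuous fun y => C * dist x y + ∑ n ∈ Finset.range (m + 1), r n x y := by
      have := fun n => rcont n x
      fun_prop
    have hm1 : x ∈ K (m + 1) := hmono (Nat.le_succ m) hm
    have hlt : ∀ᶠ y in nhds x, C * dist x y + ∑ n ∈ Finset.range (m + 1), r n x y < ε := by
      refine hcont.continuousAt.eventually_lt continuousAt_const ?_
      simpa [rself] using hε
    filter_upwards [hlt, mem_interior_iff_mem_nhds.1 (hsub m hm)] with y hy hyK
    exact hb y (by rw [hdm (m + 1) x hm1 y hyK]; exact hy)
  · rintro ⟨M, hM⟩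
    rcases s.eq_empty_or_nonempty with rfl | ⟨x, hx⟩
    · simp
    obtain ⟨m, hm⟩ := hex x
    obtain ⟨k, hk⟩ := exists_nat_gt M
    refine (hK (max m k + 1)).closure_of_subset fun y hy => ?_
    by_contra hyK
    have h1 := hII (max m k) x (hmono (le_max_left _ _) hm) y hyK
    have h2 := hM x hx y hy
    have h3 : (k : ℝ) ≤ ((max m k + 1 : ℕ) : ℝ) :=
      Nat.cast_le.2 ((le_max_right m k).trans (Nat.le_succ _))
    linarith
  · exact (mul_le_mul_of_nonneg_right (by linarith) dist_nonneg).trans (hCd x y)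
  · cases n with
    | zero => exact (mul_le_mul_of_nonneg_right (by simp; linarith) dist_nonneg).trans (hCd x y)
    | succ n => exact (rG n x hx y hy).trans (hrd n x y)
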